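/- Let J ⊆ 𝔽₂⁴ and let L_J be the subgroup of the Kummer lattice K generated by {e_i : i ∈ J}. Then L_J is a primitive sublattice of K — i.e., K ∩ span_ℚ{e_i : i ∈ J} = span_ℤ{e_i : i ∈ J} — if and only if J contains no affine hyperplane of 𝔽₂⁴. -/

import Mathlib

/-- The index set `𝔽₂⁴`. -/
abbrev F24 := Fin 4 → ZMod 2

/-- An affine hyperplane in `𝔽₂⁴`: the level set of a nonzero linear functional. -/
def IsHyperplane (H : Set F24) : Prop :=
  ∃ (φ : F24 →ₗ[ZMod 2] ZMod 2) (c : ZMod 2), φ ≠ 0 ∧ H = {x | φ x = c}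

/-- The standard basis vector `e_i` of `ℚ^16`, coordinates indexed by `𝔽₂⁴`. -/
def eVec (i : F24) : F24 → ℚ := Pi.single i 1

/-- The half-sum `(1/2)·Σ_{i ∈ H} e_i` associated to a subset `H ⊆ 𝔽₂⁴`. -/
noncomputable def halfSum (H : Set F24) : F24 → ℚ :=
  H.indicator fun _ => (1 / 2 : ℚ)

/-- The Kummer lattice `K ⊆ ℚ^16`: the ℤ-span of the sixteen standard basis vectors
`e_i` together with the vectors `(1/2)·Σ_{i ∈ H} e_i` for all affine hyperplanes `H`. -/
noncomputable def KummerLattice : Submodule ℤ (F24 → ℚ) :=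
  Submodule.span ℤ
    (Set.range eVec ∪ {v | ∃ H : Set F24, IsHyperplane H ∧ v = halfSum H})

lemma sum_eVec (v : F24 → ℚ) : v = ∑ i, v i • eVec i := by
  funext x
  simp [eVec, Finset.sum_apply, Pi.single_apply]

/-- Vectors in the rational span of `e_i`, `i ∈ J`, vanish outside `J`. -/
lemma vanish_of_mem (J : Set F24) (v : F24 → ℚ) (hv : v ∈ Submodule.span ℚ (eVec '' J)) :
    ∀ x, x ∉ J → v x = 0 := by
  intro x hx
  induction hv using Submodule.span_induction with
  | mem w hw =>
    obtain ⟨i, hi, rfl⟩ := hw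
    have : x ≠ i := fun h => hx (h ▸ hi)
    simp [eVec, this]
  | zero => rfl
  | add a b _ _ ha hb => simp [ha, hb]
  | smul r a _ ha => simp [ha]

lemma mem_rat (J : Set F24) (v : F24 → ℚ) (hv : ∀ x, x ∉ J → v x = 0) :
    v ∈ Submodule.span ℚ (eVec '' J) := by
  rw [sum_eVec v]
  refine Submodule.sum_mem _ fun i _ => ?_
  by_cases hi : i ∈ J
  · exact Submodule.smul_mem _ _ (Submodule.subset_span ⟨i, hi, rfl⟩)
  · simp [hv i hi]

lemma mem_int (J : Set F24) (v : F24 → ℚ) (hv : ∀ x, x ∉ J → v x = 0)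
    (hz : ∀ x, ∃ n : ℤ, v x = n) :
    v ∈ Submodule.span ℤ (eVec '' J) := by
  rw [sum_eVec v]
  refine Submodule.sum_mem _ fun i _ => ?_
  by_cases hi : i ∈ J
  · obtain ⟨n, hn⟩ := hz i
    rw [hn, Int.cast_smul_eq_zsmul]
    exact Submodule.smul_mem _ _ (Submodule.subset_span ⟨i, hi, rfl⟩)
  · simp [hv i hi]

lemma integral_of_mem (J : Set F24) (v : F24 → ℚ) (hv : v ∈ Submodule.span ℤ (eVec '' J)) :
    ∀ x, ∃ n : ℤ, v x = n := by
  intro x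
  induction hv using Submodule.span_induction with
  | mem w hw =>
    obtain ⟨i, hi, rfl⟩ := hw
    by_cases h : x = i
    · exact ⟨1, by simp [eVec, h]⟩
    · exact ⟨0, by simp [eVec, h]⟩
  | zero => exact ⟨0, by simp⟩
  | add a b _ _ ha hb =>
    obtain ⟨m, hm⟩ := ha
    obtain ⟨n, hn⟩ := hb
    exact ⟨m + n, by simp [hm, hn]⟩
  | smul r a _ ha =>
    obtain ⟨m, hm⟩ := ha
    exact ⟨r * m, by simp [hm]⟩

/-- The doubled coordinates of a Kummer lattice vector reduce mod 2 to an affine function. -/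
lemma kummer_affine (v : F24 → ℚ) (hv : v ∈ KummerLattice) :
    ∃ (φ : F24 →ₗ[ZMod 2] ZMod 2) (c : ZMod 2),
      ∀ x, ∃ n : ℤ, 2 * v x = n ∧ (n : ZMod 2) = φ x + c := by
  unfold KummerLattice at hv
  induction hv using Submodule.span_induction with
  | mem w hw =>
    rcases hw with ⟨i, rfl⟩ | ⟨H, ⟨φ, c, -, rfl⟩, rfl⟩
    · refine ⟨0, 0, fun x => ?_⟩
      by_cases h : x = i
      · exact ⟨2, by simp [eVec, h], by simp; decide⟩
      · exact ⟨0, by simp [eVec, h], by simp⟩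
    · refine ⟨φ, c + 1, fun x => ?_⟩
      by_cases h : φ x = c
      · refine ⟨1, by simp [halfSum, h], ?_⟩
        rw [h]
        clear h
        revert c; decide
      · refine ⟨0, by simp [halfSum, h], ?_⟩
        generalize φ x = a at h
        revert a c; decide
  | zero => exact ⟨0, 0, fun x => ⟨0, by simp, by simp⟩⟩
  | add a b _ _ ha hb =>
    obtain ⟨φ, c, h⟩ := ha
    obtain ⟨ψ, d, k⟩ := hb
    refine ⟨φ + ψ, c + d, fun x => ?_⟩
    obtain ⟨m, hm, hm2⟩ := h x
    obtain ⟨n, hn, hn2⟩ := k x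
    refine ⟨m + n, ?_, ?_⟩
    · push_cast
      rw [← hm, ← hn, Pi.add_apply]
      ring
    · push_cast
      rw [hm2, hn2, LinearMap.add_apply]
      ring
  | smul r a _ ha =>
    obtain ⟨φ, c, h⟩ := ha
    refine ⟨(r : ZMod 2) • φ, r * c, fun x => ?_⟩
    obtain ⟨m, hm, hm2⟩ := h x
    refine ⟨r * m, ?_, ?_⟩
    · push_cast
      rw [← hm, Pi.smul_apply, zsmul_eq_mul]
      ring
    · push_cast
      rw [hm2, LinearMap.smul_apply, smul_eq_mul]
      ring

lemma hyperplane_nonempty (H : Set F24) (h : IsHyperplane H) : H.Nonempty := by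
  obtain ⟨φ, c, hφ, rfl⟩ := h
  exact LinearMap.surjective hφ c

lemma exists_hyperplane : ∃ H : Set F24, IsHyperplane H := by
  refine ⟨_, LinearMap.proj 0, 0, ?_, rfl⟩
  intro h
  have := LinearMap.congr_fun h (fun _ => 1)
  simp at this

/-- The sublattice of the Kummer lattice generated by `{e_i : i ∈ J}` is primitive
(`K ∩ span_ℚ{e_i : i ∈ J} = span_ℤ{e_i : i ∈ J}`) if and only if `J` contains no
affine hyperplane of `𝔽₂⁴`. -/
theorem kummer_sublattice_primitive_iff (J : Set F24) :
    (∀ v : F24 → ℚ, v ∈ KummerLattice →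
        v ∈ Submodule.span ℚ (eVec '' J) → v ∈ Submodule.span ℤ (eVec '' J)) ↔
      ¬ ∃ H : Set F24, IsHyperplane H ∧ H ⊆ J := by
  constructor
  · rintro h ⟨H, hH, hHJ⟩
    have h1 : halfSum H ∈ KummerLattice := Submodule.subset_span (Or.inr ⟨H, hH, rfl⟩)
    have h2 : halfSum H ∈ Submodule.span ℚ (eVec '' J) :=
      mem_rat J _ fun x hx => Set.indicator_of_notMem (fun hxH => hx (hHJ hxH)) _
    obtain ⟨x, hx⟩ := hyperplane_nonempty H hH
    obtain ⟨n, hn⟩ := integral_of_mem J _ (h _ h1 h2) x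
    rw [halfSum, Set.indicator_of_mem hx] at hn
    have h3 : (1 : ℚ) = 2 * n := by linarith
    have h4 : (1 : ℤ) = 2 * n := by exact_mod_cast h3
    omega
  · intro hJ v hK hQ
    have hv := vanish_of_mem J v hQ
    obtain ⟨φ, c, h⟩ := kummer_affine v hK
    have key : ∀ x, φ x + c ≠ 0 → x ∈ J := by
      intro x hx
      by_contra hxJ
      obtain ⟨n, hn, hn2⟩ := h x
      rw [hv x hxJ, mul_zero] at hn
      have : n = 0 := by exact_mod_cast hn.symm
      rw [this, Int.cast_zero] at hn2
      exact hx hn2.symm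
    by_cases hφ : φ = 0
    · by_cases hc : c = 0
      · refine mem_int J v hv fun x => ?_
        obtain ⟨n, hn, hn2⟩ := h x
        rw [hφ, hc, LinearMap.zero_apply, add_zero] at hn2
        obtain ⟨k, hk⟩ := (ZMod.intCast_zmod_eq_zero_iff_dvd n 2).1 hn2
        refine ⟨k, ?_⟩
        rw [hk] at hn
        push_cast at hn
        linarith
      · obtain ⟨H, hH⟩ := exists_hyperplane
        exact absurd ⟨H, hH, fun x _ => key x (by simpa [hφ] using hc)⟩ hJ
    · refine absurd ⟨{x | φ x = c + 1}, ⟨φ, c + 1, hφ, rfl⟩, fun x hx => key x ?_⟩ hJ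
      have hx' : φ x = c + 1 := hx
      rw [hx']
      clear * -
      revert c; decide
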